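/- The variance of the new estimator admits the integral representation Var[ê] = ∫₀¹ (q(S) − q(D(S;z,r)))² / z² dz, where D(S;z,r) = {s ∈ S : z < r(s)}, q(∅) := 0, and the variance is q(S)²(1/pₙ − 1) + Σ_{j=1}^{n−1}(q(S) − q(D(S;p_j,r)))²(1/p_j − 1/p_{j+1}) with p₁ < ... < pₙ the distinct values of r on S. -/

import Mathlib

open MeasureTheory

lemma piece_aux (f : ℝ → ℝ) (a b c : ℝ) (ha : 0 < a) (hab : a ≤ b)
    (hf : ∀ z ∈ Set.Ioo a b, f z = c / z ^ 2) :
    IntervalIntegrable f volume a b ∧ ∫ z in a..b, f z = c * (1 / a - 1 / b) := by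
  have hcont : ContinuousOn (fun z : ℝ => c / z ^ 2) (Set.uIcc a b) := by
    rw [Set.uIcc_of_le hab]
    apply ContinuousOn.div continuousOn_const (by fun_prop)
    intro z hz
    have : 0 < z := lt_of_lt_of_le ha hz.1
    positivity
  have hint := hcont.intervalIntegrable (μ := volume)
  have hae : ∀ᵐ z ∂(volume : Measure ℝ), z ∈ Set.uIoc a b → f z = c / z ^ 2 := by
    have hb : ∀ᵐ z ∂(volume : Measure ℝ), z ≠ b := by
      simp [ae_iff]
    filter_upwards [hb] with z hz hm
    rw [Set.uIoc_of_le hab] at hm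
    exact hf z ⟨hm.1, lt_of_le_of_ne hm.2 hz⟩
  constructor
  · refine hint.congr_ae ?_
    rw [Filter.EventuallyEq, ae_restrict_iff' measurableSet_uIoc]
    filter_upwards [hae] with z hz hm
    exact (hz hm).symm
  · rw [intervalIntegral.integral_congr_ae hae]
    rw [intervalIntegral.integral_eq_sub_of_hasDerivAt (f := fun z => - c * z⁻¹) _ hint]
    · ring
    · intro z hz
      rw [Set.uIcc_of_le hab] at hz
      have : 0 < z := lt_of_lt_of_le ha hz.1
      have h := (hasDerivAt_inv this.ne').const_mul (-c)
      have e : c / z ^ 2 = -c * -(z ^ 2)⁻¹ := by ring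
      show HasDerivAt (fun z => -c * z⁻¹) (c / z ^ 2) z
      rw [e]
      exact h

/-- Integral representation of the variance of the new estimator:
`∫₀¹ (q(S) − q(D(S;z,r)))²/z² dz
  = q(S)²(1/pₙ − 1) + ∑_{j=1}^{n−1}(q(S) − q(D(S;p_j,r)))²(1/p_j − 1/p_{j+1})`. -/
theorem stmt_7 {α : Type*} [DecidableEq α] (S : Finset α) (hS : S.Nonempty)
    (r : α → ℝ) (hr : ∀ s ∈ S, r s ∈ Set.Ioc (0 : ℝ) 1)
    (n : ℕ) (hn : 1 ≤ n) (p : ℕ → ℝ) (hp0 : p 0 = 0)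
    (hmono : ∀ i < n, p i < p (i + 1))
    (himg : S.image r = (Finset.range n).image (fun j => p (j + 1)))
    (q : Finset α → ℝ) (hq0 : q (∅ : Finset α) = 0) :
    (∫ z in Set.Ico (0 : ℝ) 1, (q S - q (S.filter (fun s => z < r s))) ^ 2 / z ^ 2)
      = q S ^ 2 * (1 / p n - 1)
        + ∑ j ∈ Finset.Ico 1 n,
            (q S - q (S.filter (fun s => p j < r s))) ^ 2 * (1 / p j - 1 / p (j + 1)) := by
  have hle : ∀ j ≤ n, ∀ i ≤ j, p i ≤ p j := by
    intro j
    induction j with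
    | zero => intro _ i hi; simp [Nat.le_zero.mp hi]
    | succ j ih =>
      intro hj i hi
      rcases Nat.lt_or_ge i (j + 1) with h | h
      · exact (ih (by omega) i (by omega)).trans (hmono j (by omega)).le
      · rw [le_antisymm hi h]
  have hex : ∀ s ∈ S, ∃ k < n, p (k + 1) = r s := by
    intro s hs
    have : r s ∈ S.image r := Finset.mem_image_of_mem r hs
    rw [himg] at this
    simpa using this
  have hpn1 : p n ≤ 1 := by
    have : p n ∈ (Finset.range n).image (fun j => p (j + 1)) := by
      refine Finset.mem_image.mpr ⟨n - 1, by simp; omega, ?_⟩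
      simp only [Nat.sub_add_cancel hn]
    rw [← himg] at this
    obtain ⟨s, hs, h⟩ := Finset.mem_image.mp this
    rw [← h]; exact (hr s hs).2
  have hp1 : 0 < p 1 := by have := hmono 0 (by omega); simpa [hp0] using this
  have hpos : ∀ j ≤ n, 1 ≤ j → 0 < p j := fun j hj h1 => hp1.trans_le (hle j hj 1 h1)
  set f : ℝ → ℝ := fun z => (q S - q (S.filter (fun s => z < r s))) ^ 2 / z ^ 2 with hf
  have hpiece : ∀ j < n, ∀ z ∈ Set.Ioo (p j) (p (j + 1)),
      f z = (q S - q (S.filter (fun s => p j < r s))) ^ 2 / z ^ 2 := by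
    intro j hj z hz
    have : S.filter (fun s => z < r s) = S.filter (fun s => p j < r s) := by
      apply Finset.filter_congr
      intro s hs
      obtain ⟨k, hk, hks⟩ := hex s hs
      rw [← hks]
      constructor
      · exact fun h => hz.1.trans h
      · intro h
        refine hz.2.trans_le (hle _ (by omega) _ ?_)
        by_contra hc
        exact absurd (hle j hj.le (k + 1) (by omega)) (not_le.mpr h)
    simp only [hf, this]
  have hlast : ∀ z ∈ Set.Ioo (p n) 1, f z = q S ^ 2 / z ^ 2 := by
    intro z hz
    have : S.filter (fun s => z < r s) = ∅ := by
      apply Finset.filter_false_of_mem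
      intro s hs
      obtain ⟨k, hk, hks⟩ := hex s hs
      rw [← hks, not_lt]
      exact (hle n le_rfl (k + 1) (by omega)).trans hz.1.le
    simp only [hf, this, hq0, sub_zero]
  have hzero : ∀ z ∈ Set.Ioo 0 (p 1), f z = 0 := by
    intro z hz
    have h0 := hpiece 0 (by omega) z (by simpa [hp0] using hz)
    have : S.filter (fun s => p 0 < r s) = S := by
      apply Finset.filter_true_of_mem
      intro s hs
      rw [hp0]; exact (hr s hs).1
    rw [h0, this]; simp
  have hfirst : IntervalIntegrable f volume 0 (p 1) ∧ ∫ z in (0 : ℝ)..p 1, f z = 0 := by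
    have hae : ∀ᵐ z ∂(volume : Measure ℝ), z ∈ Set.uIoc 0 (p 1) → f z = 0 := by
      have hb : ∀ᵐ z ∂(volume : Measure ℝ), z ≠ p 1 := by
        simp [ae_iff]
      filter_upwards [hb] with z hz hm
      rw [Set.uIoc_of_le hp1.le] at hm
      exact hzero z ⟨hm.1, lt_of_le_of_ne hm.2 hz⟩
    constructor
    · refine (intervalIntegrable_const (c := (0 : ℝ))).congr_ae ?_
      rw [Filter.EventuallyEq, ae_restrict_iff' measurableSet_uIoc]
      filter_upwards [hae] with z hz hm
      exact (hz hm).symm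
    · rw [intervalIntegral.integral_congr_ae hae]; simp
  have hind : ∀ m, 1 ≤ m → m ≤ n → IntervalIntegrable f volume 0 (p m) ∧
      ∫ z in (0 : ℝ)..p m, f z = ∑ j ∈ Finset.Ico 1 m,
        (q S - q (S.filter (fun s => p j < r s))) ^ 2 * (1 / p j - 1 / p (j + 1)) := by
    intro m hm
    induction m, hm using Nat.le_induction with
    | base => intro _; simpa using hfirst
    | succ m hm ih =>
      intro hmn
      obtain ⟨i1, e1⟩ := ih (by omega)
      obtain ⟨i2, e2⟩ := piece_aux f (p m) (p (m + 1)) _ (hpos m (by omega) hm)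
        (hmono m (by omega)).le (hpiece m (by omega))
      refine ⟨i1.trans i2, ?_⟩
      rw [← intervalIntegral.integral_add_adjacent_intervals i1 i2, e1, e2,
        Finset.sum_Ico_succ_top hm]
  obtain ⟨i1, e1⟩ := hind n hn le_rfl
  obtain ⟨i2, e2⟩ := piece_aux f (p n) 1 _ (hpos n le_rfl hn) hpn1 hlast
  rw [integral_Ico_eq_integral_Ioc, ← intervalIntegral.integral_of_le zero_le_one,
    ← intervalIntegral.integral_add_adjacent_intervals i1 i2, e1, e2]
  ring
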